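/- Let p > N and let Ω ⊆ ℝ^N be a domain. Then for every u ∈ C_c^∞(Ω ∖ {0}), ((p−N)/p)^p · ∫_Ω |u(x)|^p / H⁰(x)^p dx ≤ ∫_Ω |(x/H⁰(x)) · ∇u(x)|^p dx. -/

import Mathlib

/-!
Write `K` for the polar function `H⁰`, `N` for the dimension and `‖·‖` for the norm of
`L^p(ℝ^N)`. Since `K` is positively homogeneous, the dilated family `f_t(x) = u(t x) / K(x)`
satisfies `‖f_t‖ = t ^ (1 - N/p) ‖f_1‖`, so `t ↦ ‖f_t‖` has derivative `(1 - N/p) ‖f_1‖` at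
`t = 1`. The triangle inequality bounds the modulus of this derivative by the norm of the derivative
of the family itself, which is `x ↦ ∇u(x) · x / K(x)`. Raising `|1 - N/p| ‖f_1‖ ≤ ‖∇u · x / K‖` to
the power `p` gives the inequality.
-/

open MeasureTheory Set Filter
open scoped RealInnerProductSpace Topology ENNReal NNReal

noncomputable section

/-- `ℝ^N` as a Euclidean space. -/
abbrev Euc (N : ℕ) := EuclideanSpace ℝ (Fin N)

/-- `H : ℝ^N → ℝ` is a Finsler norm: nonnegative, convex, `C²` away from the origin,
even and positively one-homogeneous, comparable to the Euclidean norm, and with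
positive definite Hessian of `H²` away from the origin. -/
structure IsFinslerNorm {N : ℕ} (H : Euc N → ℝ) : Prop where
  nonneg : ∀ ξ, 0 ≤ H ξ
  convexOn : ConvexOn ℝ Set.univ H
  smooth : ContDiffOn ℝ 2 H {(0 : Euc N)}ᶜ
  homog : ∀ (t : ℝ) (ξ : Euc N), H (t • ξ) = |t| * H ξ
  bounds : ∃ a b : ℝ, 0 < a ∧ a ≤ b ∧ ∀ ξ : Euc N, a * ‖ξ‖ ≤ H ξ ∧ H ξ ≤ b * ‖ξ‖
  hessPosDef : ∀ ξ : Euc N, ξ ≠ 0 → ∀ v : Euc N, v ≠ 0 →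
    0 < iteratedFDeriv ℝ 2 (fun x => (H x) ^ 2) ξ ![v, v]

/-- The polar function `H⁰(x) = sup_{ξ ≠ 0} (ξ·x)/H(ξ)` of a Finsler norm. -/
def polarNorm {N : ℕ} (H : Euc N → ℝ) (x : Euc N) : ℝ :=
  sSup {r : ℝ | ∃ ξ : Euc N, ξ ≠ 0 ∧ r = ⟪ξ, x⟫ / H ξ}

/-- `u ∈ C_c^∞(Ω)`: a smooth function with compact support contained in `Ω`. -/
def IsTestFun {N : ℕ} (Ω : Set (Euc N)) (u : Euc N → ℝ) : Prop :=
  ContDiff ℝ (⊤ : ℕ∞) u ∧ HasCompactSupport u ∧ tsupport u ⊆ Ω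

section LpNorm

variable {α F : Type*} [MeasurableSpace α] {μ : Measure α} [NormedAddCommGroup F] {q : ℝ≥0∞}

lemma lpNorm_ofReal_rpow_eq_setIntegral {p : ℝ} (hp : 0 < p) {f : α → F}
    (hf : AEStronglyMeasurable f μ) {s : Set α} (hs : Function.support f ⊆ s) :
    lpNorm f (.ofReal p) μ ^ p = ∫ x in s, ‖f x‖ ^ p ∂μ := by
  rw [lpNorm_eq_integral_norm_rpow_toReal (by simpa using hp) ENNReal.ofReal_ne_top hf,
    ENNReal.toReal_ofReal hp.le, Real.rpow_inv_rpow (by positivity) hp.ne',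
    setIntegral_eq_integral_of_forall_compl_eq_zero]
  intro x hx
  rw [Function.notMem_support.1 fun h => hx (hs h), norm_zero, Real.zero_rpow hp.ne']

lemma abs_lpNorm_sub_lpNorm_le (hq : 1 ≤ q) {f g : α → F} (hf : MemLp f q μ) (hg : MemLp g q μ) :
    |lpNorm f q μ - lpNorm g q μ| ≤ lpNorm (f - g) q μ := by
  rw [abs_sub_le_iff, sub_le_iff_le_add', sub_le_iff_le_add']
  exact ⟨lpNorm_le_lpNorm_add_lpNorm_sub' hg hq, lpNorm_le_lpNorm_add_lpNorm_sub hf hq⟩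

lemma tendsto_lpNorm_of_dominated {ι : Type*} {l : Filter ι} [l.IsCountablyGenerated] [l.NeBot]
    (hq₀ : q ≠ 0) (hq : q ≠ ∞) {f : ι → α → F} {g : α → F} {bound : α → ℝ}
    (hf : ∀ᶠ i in l, AEStronglyMeasurable (f i) μ) (hbound : MemLp bound q μ)
    (hle : ∀ᶠ i in l, ∀ᵐ x ∂μ, ‖f i x‖ ≤ bound x)
    (hlim : ∀ᵐ x ∂μ, Tendsto (f · x) l (𝓝 (g x))) :
    Tendsto (fun i => lpNorm (f i) q μ) l (𝓝 (lpNorm g q μ)) := by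
  have hg : AEStronglyMeasurable g μ := by
    obtain ⟨s, hs⟩ := l.exists_seq_tendsto
    obtain ⟨n, hn⟩ := eventually_atTop.1 (hs.eventually hf)
    exact aestronglyMeasurable_of_tendsto_ae atTop (fun k => hn (k + n) (n.le_add_left k))
      (hlim.mono fun x hx => (hx.comp hs).comp (tendsto_add_atTop_nat n))
  have hint : Tendsto (fun i => ∫ x, ‖f i x‖ ^ q.toReal ∂μ) l (𝓝 (∫ x, ‖g x‖ ^ q.toReal ∂μ)) := by
    refine tendsto_integral_filter_of_dominated_convergence (fun x => ‖bound x‖ ^ q.toReal)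
      (hf.mono fun i hi => hi.norm.aemeasurable.pow_const _ |>.aestronglyMeasurable) ?_
      (hbound.integrable_norm_rpow hq₀ hq)
      (hlim.mono fun x hx => hx.norm.rpow_const (Or.inr ENNReal.toReal_nonneg))
    filter_upwards [hle] with i hi
    filter_upwards [hi] with x hx
    rw [Real.norm_of_nonneg (by positivity)]
    gcongr
    exact hx.trans (le_abs_self _)
  rw [lpNorm_eq_integral_norm_rpow_toReal hq₀ hq hg]
  refine (hint.rpow_const (Or.inr (by positivity))).congr' ?_
  filter_upwards [hf] with i hi
  rw [lpNorm_eq_integral_norm_rpow_toReal hq₀ hq hi]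

lemma abs_deriv_lpNorm_le [NormedSpace ℝ F] (hq₁ : 1 ≤ q) (hq : q ≠ ∞) {f : ℝ → α → F}
    {f' : α → F} {bound : α → ℝ} {t₀ d : ℝ} (hf : ∀ᶠ t in 𝓝 t₀, MemLp (f t) q μ)
    (hbound : MemLp bound q μ)
    (hle : ∀ᶠ t in 𝓝 t₀, ∀ x, ‖f t x - f t₀ x‖ ≤ |t - t₀| * bound x)
    (hderiv : ∀ x, HasDerivAt (f · x) (f' x) t₀)
    (hnorm : HasDerivAt (fun t => lpNorm (f t) q μ) d t₀) : |d| ≤ lpNorm f' q μ := by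
  have hf₀ : MemLp (f t₀) q μ := hf.self_of_nhds
  have hf_ne : ∀ᶠ t in 𝓝[≠] t₀, MemLp (f t) q μ := nhdsWithin_le_nhds hf
  have hslope : Tendsto (fun t => lpNorm ((t - t₀)⁻¹ • (f t - f t₀)) q μ) (𝓝[≠] t₀)
      (𝓝 (lpNorm f' q μ)) := by
    refine tendsto_lpNorm_of_dominated (zero_lt_one.trans_le hq₁).ne' hq
      (hf_ne.mono fun t ht => ((ht.sub hf₀).const_smul _).aestronglyMeasurable) hbound ?_
      (ae_of_all _ fun x => (hderiv x).tendsto_slope)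
    filter_upwards [nhdsWithin_le_nhds hle, self_mem_nhdsWithin] with t ht hne
    refine ae_of_all _ fun x => ?_
    have hpos : 0 < |t - t₀| := abs_pos.2 (sub_ne_zero.2 hne)
    rw [Pi.smul_apply, Pi.sub_apply, norm_smul, norm_inv, Real.norm_eq_abs, inv_mul_le_iff₀ hpos]
    exact ht x
  refine le_of_tendsto_of_tendsto hnorm.tendsto_slope.abs hslope ?_
  filter_upwards [hf_ne] with t ht
  rw [slope_def_module, smul_eq_mul, abs_mul, lpNorm_const_smul, coe_nnnorm, Real.norm_eq_abs]
  gcongr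
  exact abs_lpNorm_sub_lpNorm_le hq₁ ht hf₀

lemma memLp_smul_of_support_subset [NormedSpace ℝ F] [TopologicalSpace α] [T2Space α]
    [OpensMeasurableSpace α] [IsFiniteMeasureOnCompacts μ] {A : Set α}
    (hA : IsCompact A) {w : α → ℝ} (hw : MemLp w q (μ.restrict A)) {v : α → F} (hv : Continuous v)
    (hvA : Function.support v ⊆ A) :
    MemLp (fun x => w x • v x) q μ := by
  have hwv : (fun x => w x • v x) = A.indicator w • v := by
    ext x
    by_cases hx : x ∈ A
    · simp [hx]
    · simp [hx, Function.notMem_support.1 fun h => hx (hvA h)]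
  rw [hwv]
  exact (hv.memLp_top_of_hasCompactSupport (.of_support_subset_isCompact hA hvA) μ).smul
    ((memLp_indicator_iff_restrict hA.measurableSet).2 hw)

end LpNorm

section Dilation

variable {E F : Type*}

open scoped Pointwise in
lemma exists_isCompact_forall_smul_mem [TopologicalSpace E] [AddCommGroup E] [Module ℝ E]
    [ContinuousSMul ℝ E] {S : Set E} (hS : IsCompact S) (h0 : (0 : E) ∉ S) :
    ∃ A : Set E, IsCompact A ∧ (0 : E) ∉ A ∧ ∀ᶠ t in 𝓝 (1 : ℝ), ∀ x, t • x ∈ S → x ∈ A := by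
  refine ⟨Icc (1 / 2 : ℝ) 2 • S, isCompact_Icc.smul_set hS, ?_, ?_⟩
  · rintro ⟨t, ht, x, hx, htx⟩
    rcases smul_eq_zero.1 htx with rfl | rfl
    · norm_num at ht
    · exact h0 hx
  · filter_upwards [Ioo_mem_nhds (show (1 / 2 : ℝ) < 1 by norm_num) one_lt_two] with t ht x hx
    have htpos : 0 < t := one_half_pos.trans ht.1
    refine ⟨t⁻¹, ⟨?_, ?_⟩, t • x, hx, inv_smul_smul₀ htpos.ne' x⟩
    · rw [one_div]
      exact inv_anti₀ htpos ht.2.le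
    · rw [inv_le_comm₀ htpos two_pos, ← one_div]
      exact ht.1.le

variable [NormedAddCommGroup E] [NormedSpace ℝ E] [FiniteDimensional ℝ E] [MeasurableSpace E]
  [BorelSpace E] {μ : Measure E} [μ.IsAddHaarMeasure] [NormedAddCommGroup F] {q : ℝ≥0∞}

lemma lpNorm_comp_smul (hq : q ≠ ∞) {f : E → F} (hf : AEStronglyMeasurable f μ) {t : ℝ}
    (ht : 0 < t) :
    lpNorm (fun x => f (t • x)) q μ
      = t ^ (-(Module.finrank ℝ E / q.toReal)) * lpNorm f q μ := by
  have hqmp := Measure.quasiMeasurePreserving_smul μ ht.ne'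
  have hmap := eLpNorm_map_measure (p := q) (hf.mono_ac hqmp.absolutelyContinuous)
    hqmp.aemeasurable
  rw [Measure.map_addHaar_smul μ ht.ne', eLpNorm_smul_measure_of_ne_top hq] at hmap
  rw [← Function.comp_def, ← toReal_eLpNorm (hf.comp_quasiMeasurePreserving hqmp),
    ← toReal_eLpNorm hf, ← hmap, smul_eq_mul, ENNReal.toReal_mul, ← ENNReal.toReal_rpow,
    ENNReal.toReal_ofReal (abs_nonneg _), abs_of_pos (by positivity), ENNReal.toReal_div,
    ENNReal.toReal_one, ← Real.rpow_natCast, ← Real.rpow_neg ht.le, ← Real.rpow_mul ht.le]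
  congr 2
  ring

variable [NormedSpace ℝ F] {w : E → ℝ} {σ : ℝ}

lemma lpNorm_weight_smul_comp_smul (hq : q ≠ ∞)
    (hw : ∀ t : ℝ, 0 < t → ∀ x, w (t • x) = t ^ (-σ) * w x) {u : E → F}
    (hwu : AEStronglyMeasurable (fun x => w x • u x) μ) {t : ℝ} (ht : 0 < t) :
    lpNorm (fun x => w x • u (t • x)) q μ
      = t ^ (σ - Module.finrank ℝ E / q.toReal) * lpNorm (fun x => w x • u x) q μ := by
  have hdilate : (fun x => w x • u (t • x)) = t ^ σ • fun x => w (t • x) • u (t • x) := by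
    ext x
    rw [Pi.smul_apply, hw t ht, smul_smul, ← mul_assoc, ← Real.rpow_add ht, add_neg_cancel,
      Real.rpow_zero, one_mul]
  rw [hdilate, lpNorm_const_smul, lpNorm_comp_smul hq hwu ht, coe_nnnorm,
    Real.norm_of_nonneg (by positivity), ← mul_assoc, ← Real.rpow_add ht, ← sub_eq_add_neg]

lemma hasDerivAt_lpNorm_weight_smul_comp_smul (hq : q ≠ ∞)
    (hw : ∀ t : ℝ, 0 < t → ∀ x, w (t • x) = t ^ (-σ) * w x) {u : E → F}
    (hwu : AEStronglyMeasurable (fun x => w x • u x) μ) :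
    HasDerivAt (fun t : ℝ => lpNorm (fun x => w x • u (t • x)) q μ)
      ((σ - Module.finrank ℝ E / q.toReal) * lpNorm (fun x => w x • u x) q μ) 1 := by
  have hpow := (Real.hasDerivAt_rpow_const (x := 1) (p := σ - Module.finrank ℝ E / q.toReal)
    (Or.inl one_ne_zero)).mul_const (lpNorm (fun x => w x • u x) q μ)
  rw [Real.one_rpow, mul_one] at hpow
  refine hpow.congr_of_eventuallyEq ?_
  filter_upwards [lt_mem_nhds one_pos] with t ht
  exact lpNorm_weight_smul_comp_smul hq hw hwu ht

theorem abs_mul_lpNorm_le_lpNorm_fderiv (hq₁ : 1 ≤ q) (hq : q ≠ ∞)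
    (hw : ∀ t : ℝ, 0 < t → ∀ x, w (t • x) = t ^ (-σ) * w x)
    (hwint : ∀ A : Set E, IsCompact A → (0 : E) ∉ A → MemLp w q (μ.restrict A)) {u : E → F}
    (hu : ContDiff ℝ 1 u) (huc : HasCompactSupport u) (hu₀ : (0 : E) ∉ tsupport u) :
    |σ - Module.finrank ℝ E / q.toReal| * lpNorm (fun x => w x • u x) q μ
      ≤ lpNorm (fun x => w x • fderiv ℝ u x x) q μ := by
  obtain ⟨A, hA, h0A, hSA⟩ := exists_isCompact_forall_smul_mem huc.isCompact hu₀
  have hzero : ∀ᶠ t in 𝓝 (1 : ℝ), ∀ x, x ∉ A → u (t • x) = 0 := hSA.mono fun t ht x hx =>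
    image_eq_zero_of_notMem_tsupport fun h => hx (ht x h)
  have hmem : ∀ᶠ t in 𝓝 (1 : ℝ), MemLp (fun x => w x • u (t • x)) q μ := hzero.mono fun t ht =>
    memLp_smul_of_support_subset hA (hwint A hA h0A) (hu.continuous.comp (continuous_const_smul t))
      fun x hx => by_contra fun hxA => hx (ht x hxA)
  obtain ⟨L, hL⟩ := ContDiff.lipschitzWith_of_hasCompactSupport huc hu one_ne_zero
  obtain ⟨R, hR⟩ := hA.isBounded.exists_norm_le
  have hle : ∀ᶠ t in 𝓝 (1 : ℝ), ∀ x, ‖w x • u (t • x) - w x • u ((1 : ℝ) • x)‖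
      ≤ |t - 1| * (L * R * ‖A.indicator w x‖) := by
    filter_upwards [hzero] with t ht x
    by_cases hx : x ∈ A
    · calc ‖w x • u (t • x) - w x • u ((1 : ℝ) • x)‖
          = ‖w x‖ * ‖u (t • x) - u ((1 : ℝ) • x)‖ := by rw [← smul_sub, norm_smul]
        _ ≤ ‖w x‖ * (L * (|t - 1| * ‖x‖)) := by
          gcongr
          rw [← Real.norm_eq_abs, ← norm_smul, sub_smul]
          exact hL.norm_sub_le _ _
        _ ≤ ‖w x‖ * (L * (|t - 1| * R)) := by gcongr; exact hR x hx
        _ = |t - 1| * (L * R * ‖A.indicator w x‖) := by rw [indicator_of_mem hx]; ring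
    · rw [ht x hx, hzero.self_of_nhds x hx, sub_self, norm_zero, indicator_of_notMem hx, norm_zero,
        mul_zero, mul_zero]
  have hderiv (x : E) :
      HasDerivAt (fun t : ℝ => w x • u (t • x)) (w x • fderiv ℝ u x x) 1 := by
    have hux : HasFDerivAt u (fderiv ℝ u x) ((1 : ℝ) • x) := by
      rw [one_smul]
      exact (hu.differentiable one_ne_zero x).hasFDerivAt
    simpa only [one_smul] using!
      (hux.comp_hasDerivAt (1 : ℝ) ((hasDerivAt_id' (1 : ℝ)).smul_const x)).const_smul (w x)
  have hwu : AEStronglyMeasurable (fun x => w x • u x) μ := by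
    simpa only [one_smul] using hmem.self_of_nhds.aestronglyMeasurable
  have hbound : MemLp (fun x => L * R * ‖A.indicator w x‖) q μ :=
    ((memLp_indicator_iff_restrict hA.measurableSet).2 (hwint A hA h0A)).norm.const_mul _
  simpa only [abs_mul, abs_of_nonneg (lpNorm_nonneg (f := fun x => w x • u x))] using
    abs_deriv_lpNorm_le hq₁ hq hmem hbound hle hderiv
      (hasDerivAt_lpNorm_weight_smul_comp_smul hq hw hwu)

end Dilation

/-- A coercive gauge: a measurable, positively homogeneous function bounded below by a positive
multiple of the norm. Hardy's inequality is proved for every such function in place of the polar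
function `H⁰`. -/
structure IsCoerciveGauge {E : Type*} [NormedAddCommGroup E] [NormedSpace ℝ E] [MeasurableSpace E]
    (K : E → ℝ) : Prop where
  measurable : Measurable K
  map_smul : ∀ t : ℝ, 0 < t → ∀ x, K (t • x) = t * K x
  exists_mul_norm_le : ∃ c : ℝ, 0 < c ∧ ∀ x, c * ‖x‖ ≤ K x

namespace IsCoerciveGauge

variable {E : Type*} [NormedAddCommGroup E] [NormedSpace ℝ E] [MeasurableSpace E] {K : E → ℝ}

lemma nonneg (hK : IsCoerciveGauge K) (x : E) : 0 ≤ K x := by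
  obtain ⟨c, hc, hcK⟩ := hK.exists_mul_norm_le
  exact (by positivity : 0 ≤ c * ‖x‖).trans (hcK x)

lemma memLp_inv_restrict [OpensMeasurableSpace E] (hK : IsCoerciveGauge K) {μ : Measure E}
    [IsFiniteMeasureOnCompacts μ] (q : ℝ≥0∞) {A : Set E} (hA : IsCompact A) (h0 : (0 : E) ∉ A) :
    MemLp (fun x => (K x)⁻¹) q (μ.restrict A) := by
  have : IsFiniteMeasure (μ.restrict A) := ⟨by simpa using hA.measure_lt_top⟩
  have hne : ∀ x ∈ A, x ≠ 0 := fun x hx hx0 => h0 (hx0 ▸ hx)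
  obtain ⟨c, hc, hcK⟩ := hK.exists_mul_norm_le
  obtain ⟨C, hC⟩ := hA.exists_bound_of_continuousOn (f := fun x : E => (c * ‖x‖)⁻¹)
    ((continuous_const.mul continuous_norm).continuousOn.inv₀ fun x hx =>
      mul_ne_zero hc.ne' (norm_ne_zero_iff.2 (hne x hx)))
  refine .of_bound hK.measurable.inv.aestronglyMeasurable C ?_
  filter_upwards [ae_restrict_mem hA.measurableSet] with x hx
  have hpos : 0 < c * ‖x‖ := mul_pos hc (norm_pos_iff.2 (hne x hx))
  calc ‖(K x)⁻¹‖ = (K x)⁻¹ := Real.norm_of_nonneg (inv_nonneg.2 (hK.nonneg x))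
    _ ≤ (c * ‖x‖)⁻¹ := inv_anti₀ hpos (hcK x)
    _ ≤ C := (le_abs_self _).trans (hC x hx)

lemma lpNorm_inv_smul_rpow_eq_setIntegral {F : Type*} [NormedAddCommGroup F] [NormedSpace ℝ F]
    (hK : IsCoerciveGauge K) {μ : Measure E} {p : ℝ} (hp : 0 < p) {v : E → F}
    (hv : AEStronglyMeasurable v μ) {s : Set E} (hs : Function.support v ⊆ s) :
    lpNorm (fun x => (K x)⁻¹ • v x) (.ofReal p) μ ^ p = ∫ x in s, ‖(K x)⁻¹ • v x‖ ^ p ∂μ :=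
  lpNorm_ofReal_rpow_eq_setIntegral hp (hK.measurable.inv.aestronglyMeasurable.smul hv)
    ((Function.support_smul_subset_right _ v).trans hs)

end IsCoerciveGauge

section PolarNorm

variable {N : ℕ} {H : Euc N → ℝ} {a b : ℝ}

lemma inner_div_le_of_mul_norm_le (ha : 0 < a) (hH : ∀ ξ, a * ‖ξ‖ ≤ H ξ) {ξ : Euc N}
    (hξ : ξ ≠ 0) (x : Euc N) : ⟪ξ, x⟫ / H ξ ≤ a⁻¹ * ‖x‖ := by
  have hpos : 0 < a * ‖ξ‖ := mul_pos ha (norm_pos_iff.2 hξ)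
  rw [div_le_iff₀ (hpos.trans_le (hH ξ))]
  calc ⟪ξ, x⟫ ≤ ‖ξ‖ * ‖x‖ := real_inner_le_norm ξ x
    _ = a⁻¹ * ‖x‖ * (a * ‖ξ‖) := by field_simp
    _ ≤ a⁻¹ * ‖x‖ * H ξ := by gcongr; exact hH ξ

lemma inner_div_le_polarNorm (ha : 0 < a) (hH : ∀ ξ, a * ‖ξ‖ ≤ H ξ) {ξ : Euc N} (hξ : ξ ≠ 0)
    (x : Euc N) : ⟪ξ, x⟫ / H ξ ≤ polarNorm H x := by
  refine le_csSup ⟨a⁻¹ * ‖x‖, ?_⟩ ⟨ξ, hξ, rfl⟩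
  rintro _ ⟨η, hη, rfl⟩
  exact inner_div_le_of_mul_norm_le ha hH hη x

lemma polarNorm_le {c : ℝ} (hc : 0 ≤ c) {x : Euc N} (h : ∀ ξ, ξ ≠ 0 → ⟪ξ, x⟫ / H ξ ≤ c) :
    polarNorm H x ≤ c := by
  refine Real.sSup_le ?_ hc
  rintro _ ⟨ξ, hξ, rfl⟩
  exact h ξ hξ

lemma inv_mul_norm_le_polarNorm (ha : 0 < a) (hlow : ∀ ξ, a * ‖ξ‖ ≤ H ξ) (hb : 0 < b)
    (hupp : ∀ ξ, H ξ ≤ b * ‖ξ‖) (x : Euc N) : b⁻¹ * ‖x‖ ≤ polarNorm H x := by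
  rcases eq_or_ne x 0 with rfl | hx
  · rw [norm_zero, mul_zero]
    refine Real.sSup_nonneg ?_
    rintro _ ⟨ξ, -, rfl⟩
    rw [inner_zero_right, zero_div]
  · have hpos : 0 < H x := (mul_pos ha (norm_pos_iff.2 hx)).trans_le (hlow x)
    refine le_trans ?_ (inner_div_le_polarNorm ha hlow hx x)
    rw [le_div_iff₀ hpos, real_inner_self_eq_norm_sq]
    calc b⁻¹ * ‖x‖ * H x ≤ b⁻¹ * ‖x‖ * (b * ‖x‖) := by gcongr; exact hupp x
      _ = ‖x‖ ^ 2 := by field_simp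

open scoped Pointwise in
lemma polarNorm_smul {t : ℝ} (ht : 0 ≤ t) (x : Euc N) :
    polarNorm H (t • x) = t * polarNorm H x := by
  rw [polarNorm, polarNorm, ← smul_eq_mul, ← Real.sSup_smul_of_nonneg ht]
  congr 1
  ext r
  simp only [mem_smul_set, mem_ofPred_eq, inner_smul_right, smul_eq_mul, mul_div_assoc]
  constructor
  · rintro ⟨ξ, hξ, rfl⟩
    exact ⟨_, ⟨ξ, hξ, rfl⟩, rfl⟩
  · rintro ⟨_, ⟨ξ, hξ, rfl⟩, rfl⟩
    exact ⟨ξ, hξ, rfl⟩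

lemma lipschitzWith_polarNorm (ha : 0 < a) (hH : ∀ ξ, a * ‖ξ‖ ≤ H ξ)
    (hnonneg : ∀ x, 0 ≤ polarNorm H x) : LipschitzWith (Real.toNNReal a⁻¹) (polarNorm H) := by
  refine .of_le_add_mul _ fun x y => ?_
  rw [Real.coe_toNNReal _ (inv_pos.2 ha).le, dist_eq_norm]
  refine polarNorm_le (add_nonneg (hnonneg y) (by positivity)) fun ξ hξ => ?_
  calc ⟪ξ, x⟫ / H ξ = ⟪ξ, y⟫ / H ξ + ⟪ξ, x - y⟫ / H ξ := by
        rw [← add_div, ← inner_add_right, add_sub_cancel]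
    _ ≤ polarNorm H y + a⁻¹ * ‖x - y‖ :=
      add_le_add (inner_div_le_polarNorm ha hH hξ y) (inner_div_le_of_mul_norm_le ha hH hξ _)

lemma isCoerciveGauge_polarNorm_of_bounds (ha : 0 < a) (hlow : ∀ ξ, a * ‖ξ‖ ≤ H ξ) (hb : 0 < b)
    (hupp : ∀ ξ, H ξ ≤ b * ‖ξ‖) : IsCoerciveGauge (polarNorm H) where
  measurable := (lipschitzWith_polarNorm ha hlow fun x => (by positivity : 0 ≤ b⁻¹ * ‖x‖).trans
    (inv_mul_norm_le_polarNorm ha hlow hb hupp x)).continuous.measurable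
  map_smul _ ht := polarNorm_smul ht.le
  exists_mul_norm_le := ⟨b⁻¹, inv_pos.2 hb, inv_mul_norm_le_polarNorm ha hlow hb hupp⟩

lemma IsFinslerNorm.isCoerciveGauge_polarNorm (hH : IsFinslerNorm H) :
    IsCoerciveGauge (polarNorm H) := by
  obtain ⟨a, b, ha, hab, hbounds⟩ := hH.bounds
  exact isCoerciveGauge_polarNorm_of_bounds ha (fun ξ => (hbounds ξ).1) (ha.trans_le hab)
    fun ξ => (hbounds ξ).2

end PolarNorm

theorem finsler_hardy_supercritical_general {E F : Type*} [NormedAddCommGroup E] [NormedSpace ℝ E]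
    [FiniteDimensional ℝ E] [MeasurableSpace E] [BorelSpace E] {μ : Measure E}
    [μ.IsAddHaarMeasure] [NormedAddCommGroup F] [NormedSpace ℝ F] {K : E → ℝ}
    (hK : IsCoerciveGauge K) {p : ℝ} (hp : 1 ≤ p) {Ω : Set E} {u : E → F} (hu : ContDiff ℝ 1 u)
    (huc : HasCompactSupport u) (huΩ : tsupport u ⊆ Ω \ {0}) :
    (|p - Module.finrank ℝ E| / p) ^ p * ∫ x in Ω, ‖u x‖ ^ p / K x ^ p ∂μ
      ≤ ∫ x in Ω, ‖fderiv ℝ u x ((K x)⁻¹ • x)‖ ^ p ∂μ := by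
  have hp₀ : 0 < p := one_pos.trans_le hp
  have hhom : ∀ t : ℝ, 0 < t → ∀ x, (K (t • x))⁻¹ = t ^ (-1 : ℝ) * (K x)⁻¹ := fun t ht x => by
    rw [hK.map_smul t ht, mul_inv, Real.rpow_neg_one]
  have hnorm := abs_mul_lpNorm_le_lpNorm_fderiv (ENNReal.one_le_ofReal.2 hp) ENNReal.ofReal_ne_top
    hhom (fun A hA h0 => hK.memLp_inv_restrict (μ := μ) (.ofReal p) hA h0) hu huc
    fun h => (huΩ h).2 rfl
  have hcoeff : |p - Module.finrank ℝ E| / p = |1 - Module.finrank ℝ E / p| := by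
    rw [one_sub_div hp₀.ne', abs_div, abs_of_pos hp₀]
  have hu_supp : Function.support u ⊆ Ω := fun x hx => (huΩ (subset_tsupport u hx)).1
  have hDu_supp : (Function.support fun x => fderiv ℝ u x x) ⊆ Ω := fun x hx =>
    (huΩ (support_fderiv_subset ℝ fun hx₀ => hx (DFunLike.congr_fun hx₀ x))).1
  have hu_int := hK.lpNorm_inv_smul_rpow_eq_setIntegral (μ := μ) hp₀
    hu.continuous.aestronglyMeasurable hu_supp
  have hDu_int := hK.lpNorm_inv_smul_rpow_eq_setIntegral (μ := μ) hp₀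
    ((hu.continuous_fderiv one_ne_zero).clm_apply continuous_id').aestronglyMeasurable hDu_supp
  calc (|p - Module.finrank ℝ E| / p) ^ p * ∫ x in Ω, ‖u x‖ ^ p / K x ^ p ∂μ
      = (|1 - Module.finrank ℝ E / p| * lpNorm (fun x => (K x)⁻¹ • u x) (.ofReal p) μ) ^ p := by
        rw [Real.mul_rpow (abs_nonneg _) lpNorm_nonneg, hu_int, hcoeff]
        simp only [norm_smul, norm_inv, Real.norm_of_nonneg (hK.nonneg _), inv_mul_eq_div,
          Real.div_rpow (norm_nonneg _) (hK.nonneg _)]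
    _ ≤ lpNorm (fun x => (K x)⁻¹ • fderiv ℝ u x x) (.ofReal p) μ ^ p := by
        rw [ENNReal.toReal_ofReal hp₀.le] at hnorm
        exact Real.rpow_le_rpow (mul_nonneg (abs_nonneg _) lpNorm_nonneg) hnorm hp₀.le
    _ = ∫ x in Ω, ‖fderiv ℝ u x ((K x)⁻¹ • x)‖ ^ p ∂μ := by
        simpa only [map_smul] using hDu_int

/-- Sharp anisotropic subcritical Hardy inequality, case p > N. -/
theorem finsler_hardy_supercritical
    (N : ℕ) (hN : 2 ≤ N) (H : Euc N → ℝ) (hH : IsFinslerNorm H)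
    (p : ℝ) (hpN : (N : ℝ) < p)
    (Ω : Set (Euc N)) (hΩopen : IsOpen Ω) (hΩconn : IsConnected Ω)
    (u : Euc N → ℝ) (hu : IsTestFun (Ω \ {0}) u) :
    ((p - (N : ℝ)) / p) ^ p * ∫ x in Ω, |u x| ^ p / polarNorm H x ^ p
      ≤ ∫ x in Ω, |⟪(polarNorm H x)⁻¹ • x, gradient u x⟫| ^ p := by
  have hp : 1 ≤ p := (Nat.one_le_cast.2 (one_le_two.trans hN)).trans hpN.le
  simpa only [Real.norm_eq_abs, finrank_euclideanSpace_fin, abs_of_pos (sub_pos.2 hpN),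
    ← inner_gradient_left, real_inner_comm] using
    finsler_hardy_supercritical_general hH.isCoerciveGauge_polarNorm hp (μ := volume)
      (hu.1.of_le (mod_cast le_top)) hu.2.1 hu.2.2
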